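/- arXiv:2406.07838 — 2 statements merged into one kernel-verified Lean document; each statement's English description precedes it below -/
import Mathlib

section
/- There exists a constant C > 0 such that for every integer n ≥ 1, log K_n(1, 1, …, 1, −n) ≥ (n/4)·(log n)² − C·n·log(n+1) (natural logarithm). Moreover, K_n(1, 1, …, 1, −n) ≥ (n+1)^{n−1} for every n ≥ 3000. -/
/-!
A flow with all supplies at least `1` is determined by its restriction to the vertices other than
the sink, and such a restriction is admissible as soon as no vertex sends on more than one unit
beyond what it receives. Arrange the vertices in `m + 1` consecutive layers of size `2e` and let
the flow from layer `k` to layer `k + 1` be an arbitrary matrix all of whose row and column sums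
are `k + 1`: every vertex of layer `k` then receives `k` and sends `k + 1`. Writing
`k + 1 = e * s + c` with `s = (k + 1) / e`, the matrices `[[A, s - A], [s - A, A]] + c • 1` with
entries of `A` at most `s` give `(s + 1) ^ e ^ 2` choices for each `k`, hence at least
`Q! ^ e ^ 3` flows when `2 * e ^ 2 * Q ≤ n`.

With `Q = 2` and `e ~ √n / 2` this gives `log K_n ≥ n ^ (3 / 2) / 100`, which beats
`(n / 4) * (log n) ^ 2`; with `e = 10` and `Q = n / 200` it beats `(n + 1) ^ (n - 1)`.
-/

open Finset

/-- The entropy-like function `h(t) = (t+1)·log(t+1) − t·log t` (with `h 0 = 0`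
since `Real.log 0 = 0`). -/
noncomputable def entH (t : ℝ) : ℝ := (t + 1) * Real.log (t + 1) - t * Real.log t

/-- `f` is an integer flow on the complete graph `k_{n+1}` with netflow `N`:
`f i j` is the flow on the edge `(i,j)` for `i < j`, it vanishes for `i ≥ j`,
and the netflow at each vertex `i` is `N i`. -/
def IsIntFlow (n : ℕ) (N : Fin (n + 1) → ℤ) (f : Fin (n + 1) → Fin (n + 1) → ℕ) : Prop :=
  (∀ i j : Fin (n + 1), ¬ i < j → f i j = 0) ∧
  ∀ i : Fin (n + 1),
    (∑ j : Fin (n + 1), if i < j then (f i j : ℤ) else 0) -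
      (∑ k : Fin (n + 1), if k < i then (f k i : ℤ) else 0) = N i

/-- The Kostant partition function: the number of integer flows on the complete
graph `k_{n+1}` with netflow `N`. -/
noncomputable def Kn (n : ℕ) (N : Fin (n + 1) → ℤ) : ℕ :=
  Nat.card {f : Fin (n + 1) → Fin (n + 1) → ℕ // IsIntFlow n N f}

/-- The flow polytope of the complete graph `k_{n+1}` with netflow `N`. -/
def FlowPolytope (n : ℕ) (N : Fin (n + 1) → ℝ) : Set (Fin (n + 1) → Fin (n + 1) → ℝ) :=
  {f | (∀ i j : Fin (n + 1), i < j → 0 ≤ f i j) ∧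
    (∀ i j : Fin (n + 1), ¬ i < j → f i j = 0) ∧
    ∀ i : Fin (n + 1),
      (∑ j : Fin (n + 1), if i < j then f i j else 0) -
        (∑ k : Fin (n + 1), if k < i then f k i else 0) = N i}

/-- The flow entropy `H(f)`. -/
noncomputable def flowEntropy (n : ℕ) (N : Fin (n + 1) → ℝ)
    (f : Fin (n + 1) → Fin (n + 1) → ℝ) : ℝ :=
  (∑ i : Fin (n + 1), ∑ j : Fin (n + 1), if i < j then entH (f i j) else 0) +
  ∑ j : Fin (n + 1), if 0 < (j : ℕ) ∧ (j : ℕ) < n then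
    entH (∑ i : Fin (n + 1), if i < j then (N i - f i j) else 0) else 0

/-- Partial sums `s_k = N_0 + ⋯ + N_k`. -/
def sPartial (n : ℕ) (N : Fin (n + 1) → ℤ) (k : ℕ) : ℤ :=
  ∑ j : Fin (n + 1), if (j : ℕ) ≤ k then N j else 0

/-- Extend `(N_0,…,N_{n−1})` to the netflow vector `(N_0,…,N_{n−1},−∑ N_i)`. -/
def extend (n : ℕ) (N : Fin n → ℤ) : Fin (n + 1) → ℤ := Fin.snoc N (-∑ i, N i)

open Matrix

section Flow

variable {n : ℕ} {N : Fin (n + 1) → ℤ} {f : Fin (n + 1) → Fin (n + 1) → ℕ}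

lemma isIntFlow_iff :
    IsIntFlow n N f ↔ (∀ i j, ¬ i < j → f i j = 0) ∧
      ∀ i, ∑ j, (f i j : ℤ) - ∑ k, (f k i : ℤ) = N i := by
  refine and_congr_right fun hzero => forall_congr' fun i => ?_
  have hite (u v : Fin (n + 1)) : (if u < v then (f u v : ℤ) else 0) = f u v := by
    split_ifs with h
    · rfl
    · simp [hzero u v h]
  simp only [hite]

lemma IsIntFlow.sum_mul_netflow (hf : IsIntFlow n N f) (φ : Fin (n + 1) → ℤ) :
    ∑ i, φ i * N i = ∑ i, ∑ j, (φ i - φ j) * f i j := by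
  calc ∑ i, φ i * N i = ∑ i, ∑ j, φ i * f i j - ∑ i, ∑ k, φ i * f k i := by
        simp only [← (isIntFlow_iff.1 hf).2, mul_sub, mul_sum, sum_sub_distrib]
    _ = ∑ i, ∑ j, (φ i - φ j) * f i j := by
        rw [sum_comm (f := fun i k => φ i * (f k i : ℤ))]
        simp only [sub_mul, sum_sub_distrib]

lemma IsIntFlow.apply_le_moment (hf : IsIntFlow n N f) (i j : Fin (n + 1)) :
    (f i j : ℤ) ≤ ∑ k : Fin (n + 1), -(k : ℤ) * N k := by
  calc (f i j : ℤ) ≤ ∑ j, (f i j : ℤ) :=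
        single_le_sum (f := fun j => (f i j : ℤ)) (fun _ _ => by positivity) (mem_univ j)
    _ ≤ ∑ i, ∑ j, (f i j : ℤ) :=
        single_le_sum (f := fun i => ∑ j, (f i j : ℤ)) (fun _ _ => by positivity) (mem_univ i)
    _ ≤ ∑ u : Fin (n + 1), ∑ v : Fin (n + 1), (-(u : ℤ) - -(v : ℤ)) * f u v := by
        refine sum_le_sum fun u _ => sum_le_sum fun v _ => ?_
        by_cases huv : u < v
        · exact le_mul_of_one_le_left (by positivity) (by have : (u : ℕ) < v := huv; omega)
        · simp [hf.1 u v huv]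
    _ = ∑ k : Fin (n + 1), -(k : ℤ) * N k := (hf.sum_mul_netflow _).symm

instance finite_isIntFlow (n : ℕ) (N : Fin (n + 1) → ℤ) :
    Finite {f : Fin (n + 1) → Fin (n + 1) → ℕ // IsIntFlow n N f} := by
  refine ((Set.finite_Iic fun _ _ =>
    (∑ k : Fin (n + 1), -(k : ℤ) * N k).toNat).subset fun f hf i j => ?_).to_subtype
  simpa using Int.toNat_le_toNat (IsIntFlow.apply_le_moment hf i j)

end Flow

section Sink

variable {n : ℕ}

/-- The flow on `k_{n+1}` that restricts to `g` on the first `n` vertices and in which vertex `i`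
sends to the sink everything it has left, given the supplies `N`. If `g` overdraws a vertex, that
edge to the sink carries `0`. -/
def withSink (N : Fin n → ℤ) (g : Fin n → Fin n → ℕ) : Fin (n + 1) → Fin (n + 1) → ℕ :=
  Fin.snoc (α := fun _ => Fin (n + 1) → ℕ)
    (fun i => Fin.snoc (α := fun _ => ℕ) (g i) (N i + ∑ k, (g k i : ℤ) - ∑ j, (g i j : ℤ)).toNat) 0

lemma withSink_injective (N : Fin n → ℤ) : Function.Injective (withSink N) := by
  intro g h hgh
  ext i j
  simpa [withSink] using congrFun₂ hgh i.castSucc j.castSucc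

lemma isIntFlow_withSink {N : Fin n → ℤ} {g : Fin n → Fin n → ℕ}
    (hzero : ∀ i j, ¬ i < j → g i j = 0)
    (hout : ∀ i, ∑ j, (g i j : ℤ) ≤ N i + ∑ k, (g k i : ℤ)) :
    IsIntFlow n (extend n N) (withSink N g) := by
  have hrest (i : Fin n) : ((N i + ∑ k, (g k i : ℤ) - ∑ j, (g i j : ℤ)).toNat : ℤ) =
      N i + ∑ k, (g k i : ℤ) - ∑ j, (g i j : ℤ) :=
    Int.toNat_of_nonneg (sub_nonneg.2 (hout i))
  refine isIntFlow_iff.2 ⟨fun i j hij => ?_, fun i => ?_⟩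
  · induction i using Fin.lastCases with
    | last => simp [withSink]
    | cast i =>
      induction j using Fin.lastCases with
      | last => exact absurd (Fin.castSucc_lt_last i) hij
      | cast j => simpa [withSink] using hzero i j (by simpa using hij)
  · induction i using Fin.lastCases with
    | last =>
      simp only [withSink, extend, Fin.sum_univ_castSucc, Fin.snoc_castSucc, Fin.snoc_last,
        Pi.zero_apply, hrest, sum_sub_distrib, sum_add_distrib]
      rw [sum_comm (f := fun i k => (g k i : ℤ))]
      simp
    | cast i =>
      simp only [withSink, extend, Fin.sum_univ_castSucc, Fin.snoc_castSucc, Fin.snoc_last,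
        Pi.zero_apply, hrest]
      simp

end Sink

section Layered

variable {W P : Type*} [Fintype W] {ρ : W → ℕ} {g : W → W → ℕ} {n : ℕ}

/-- A nonnegative integer flow `g` on `W` along edges that increase the level `ρ`, in which every
vertex sends on at most one unit more than it receives. This is what a flow with supplies at least
`1` looks like away from the sink, with the total order of the vertices relaxed to levels. -/
structure IsLayeredFlow (ρ : W → ℕ) (g : W → W → ℕ) : Prop where
  level_lt : ∀ u v, g u v ≠ 0 → ρ u < ρ v
  out_le : ∀ u, ∑ v, g u v ≤ 1 + ∑ v, g v u

lemma IsLayeredFlow.pad (hg : IsLayeredFlow ρ g) (r : ℕ) :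
    IsLayeredFlow (Sum.elim ρ fun _ : Fin r => 0) (Sum.elim (fun u => Sum.elim (g u) 0) 0) where
  level_lt := by
    rintro (u | u) (v | v) h
    · exact hg.level_lt u v h
    all_goals exact absurd rfl h
  out_le := by
    rintro (u | u) <;> simp [hg.out_le]

lemma exists_equiv_fin_lt_of_level_lt {α : Type*} [LinearOrder α] (ρ : W → α)
    (hW : Fintype.card W = n) :
    ∃ e : W ≃ Fin n, ∀ u v, ρ u < ρ v → e u < e v := by
  let e₀ := Fintype.equivFinOfCardEq hW
  exact ⟨e₀.trans (Tuple.sort (ρ ∘ e₀.symm)).symm,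
    fun u v h => (Tuple.monotone_sort (ρ ∘ e₀.symm)).reflect_lt (by simpa using h)⟩

lemma card_le_Kn_of_card_eq {F : P → W → W → ℕ} (hF : Function.Injective F)
    (hflow : ∀ p, IsLayeredFlow ρ (F p)) (hW : Fintype.card W = n)
    {N : Fin n → ℤ} (hN : ∀ i, 1 ≤ N i) :
    Nat.card P ≤ Kn n (extend n N) := by
  obtain ⟨e, he⟩ := exists_equiv_fin_lt_of_level_lt ρ hW
  let G (p : P) (i j : Fin n) : ℕ := F p (e.symm i) (e.symm j)
  have hG : Function.Injective G := fun p q hpq => hF <| by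
    ext u v
    simpa [G] using congrFun₂ hpq (e u) (e v)
  have hzero (p : P) (i j : Fin n) (hij : ¬ i < j) : G p i j = 0 := by
    by_contra h
    exact hij (by simpa using he _ _ ((hflow p).level_lt _ _ h))
  have hout (p : P) (i : Fin n) : ∑ j, (G p i j : ℤ) ≤ N i + ∑ k, (G p k i : ℤ) := by
    have hunit : ∑ j, G p i j ≤ 1 + ∑ k, G p k i := by
      simpa only [G, e.symm.sum_comp (F p (e.symm i)), e.symm.sum_comp (F p · (e.symm i))]
        using (hflow p).out_le (e.symm i)
    zify at hunit
    linarith [hN i]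
  exact Nat.card_le_card_of_injective
    (fun p => (⟨withSink N (G p), isIntFlow_withSink (hzero p) (hout p)⟩ :
      {f // IsIntFlow n (extend n N) f}))
    fun p q hpq => hG (withSink_injective N (congrArg Subtype.val hpq))

lemma card_le_Kn {F : P → W → W → ℕ} (hF : Function.Injective F)
    (hflow : ∀ p, IsLayeredFlow ρ (F p)) (hW : Fintype.card W ≤ n)
    {N : Fin n → ℤ} (hN : ∀ i, 1 ≤ N i) :
    Nat.card P ≤ Kn n (extend n N) := by
  refine card_le_Kn_of_card_eq (fun p q hpq => hF ?_)
    (fun p => (hflow p).pad (n - Fintype.card W)) (by simpa using Nat.add_sub_of_le hW) hN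
  ext u v
  exact congrFun₂ hpq (Sum.inl u) (Sum.inl v)

end Layered

section Semimagic

variable {ι κ : Type*} [Fintype ι] [Fintype κ]

/-- A semimagic square with line sum `t`: a matrix of nonnegative integers all of whose rows and
columns sum to `t`. -/
structure IsSemimagic (t : ℕ) (M : Matrix ι ι ℕ) : Prop where
  row_sum : ∀ i, ∑ j, M i j = t
  col_sum : ∀ j, ∑ i, M i j = t

lemma IsSemimagic.add {s t : ℕ} {A B : Matrix ι ι ℕ} (hA : IsSemimagic s A)
    (hB : IsSemimagic t B) : IsSemimagic (s + t) (A + B) where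
  row_sum i := by simp [sum_add_distrib, hA.row_sum, hB.row_sum]
  col_sum j := by simp [sum_add_distrib, hA.col_sum, hB.col_sum]

lemma isSemimagic_diagonal [DecidableEq ι] (c : ℕ) :
    IsSemimagic c (diagonal fun _ : ι => c) where
  row_sum i := by simp [diagonal_apply]
  col_sum j := by simp [diagonal_apply]

lemma isSemimagic_fromBlocks {s : ℕ} {A B : Matrix κ κ ℕ} (hAB : ∀ i j, A i j + B i j = s) :
    IsSemimagic (Fintype.card κ * s) (fromBlocks A B B A) where
  row_sum := by
    rintro (i | i) <;>
      simp [← sum_add_distrib, hAB, add_comm (B _ _)]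
  col_sum := by
    rintro (j | j) <;>
      simp [← sum_add_distrib, hAB, add_comm (B _ _)]

instance finite_isSemimagic (t : ℕ) : Finite {M : Matrix ι ι ℕ // IsSemimagic t M} := by
  refine ((Set.Finite.pi' fun _ : ι => Set.Finite.pi' fun _ : ι => Set.finite_Iic t).subset
    fun M hM i j => ?_).to_subtype
  exact (single_le_sum (fun _ _ => Nat.zero_le _) (mem_univ j)).trans_eq (hM.row_sum i)

lemma pow_le_card_isSemimagic (t : ℕ) :
    (t / Fintype.card κ + 1) ^ Fintype.card κ ^ 2 ≤
      Nat.card {M : Matrix (κ ⊕ κ) (κ ⊕ κ) ℕ // IsSemimagic t M} := by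
  classical
  set s := t / Fintype.card κ
  set c := t % Fintype.card κ
  let block (a : κ → κ → Fin (s + 1)) : Matrix (κ ⊕ κ) (κ ⊕ κ) ℕ :=
    let A : Matrix κ κ ℕ := of fun i j => (a i j : ℕ)
    let B : Matrix κ κ ℕ := of fun i j => ((a i j).rev : ℕ)
    fromBlocks A B B A + diagonal fun _ => c
  have hblock (a : κ → κ → Fin (s + 1)) : IsSemimagic t (block a) := by
    rw [← Nat.div_add_mod t (Fintype.card κ)]
    exact (isSemimagic_fromBlocks fun i j => by simp [Fin.val_rev]; omega).add
      (isSemimagic_diagonal c)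
  have hinj : Function.Injective block := fun a b hab => by
    ext i j
    exact congrFun₂ (fromBlocks_inj.1 (add_right_cancel hab)).1 i j
  calc (s + 1) ^ Fintype.card κ ^ 2 = Nat.card (κ → κ → Fin (s + 1)) := by simp [sq, pow_mul]
    _ ≤ _ := Nat.card_le_card_of_injective (fun a => ⟨block a, hblock a⟩)
      fun a b hab => hinj (congrArg Subtype.val hab)

end Semimagic

section Chain

variable {ι : Type*} {m : ℕ}

/-- The flow on `m + 1` copies of `ι` that is given by the matrix `T k` from the `k`-th copy to the
next one and vanishes elsewhere. -/
def chainFlow (T : Fin m → Matrix ι ι ℕ) (p q : Fin (m + 1) × ι) : ℕ :=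
  ∑ k, if p.1 = k.castSucc ∧ q.1 = k.succ then T k p.2 q.2 else 0

lemma chainFlow_castSucc_succ (T : Fin m → Matrix ι ι ℕ) (k : Fin m) (u v : ι) :
    chainFlow T (k.castSucc, u) (k.succ, v) = T k u v := by
  simp [chainFlow]

lemma chainFlow_injective :
    Function.Injective (chainFlow : (Fin m → Matrix ι ι ℕ) → _) := by
  intro S T h
  ext k u v
  simpa only [chainFlow_castSucc_succ] using congrFun₂ h (k.castSucc, u) (k.succ, v)

variable [Fintype ι]

lemma sum_chainFlow_right (T : Fin m → Matrix ι ι ℕ) (p : Fin (m + 1) × ι) :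
    ∑ q, chainFlow T p q = ∑ k, if p.1 = k.castSucc then ∑ v, T k p.2 v else 0 := by
  simp only [chainFlow]
  rw [sum_comm]
  refine sum_congr rfl fun k _ => ?_
  simp [Fintype.sum_prod_type_right, ite_and, sum_ite_irrel]

lemma sum_chainFlow_left (T : Fin m → Matrix ι ι ℕ) (q : Fin (m + 1) × ι) :
    ∑ p, chainFlow T p q = ∑ k, if q.1 = k.succ then ∑ u, T k u q.2 else 0 := by
  simp only [chainFlow]
  rw [sum_comm]
  refine sum_congr rfl fun k _ => ?_
  simp [Fintype.sum_prod_type_right, ite_and, sum_ite_irrel]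

lemma isLayeredFlow_chainFlow {T : Fin m → Matrix ι ι ℕ}
    (hT : ∀ k : Fin m, IsSemimagic (k + 1) (T k)) :
    IsLayeredFlow (fun p : Fin (m + 1) × ι => (p.1 : ℕ)) (chainFlow T) where
  level_lt p q hpq := by
    obtain ⟨k, -, hk⟩ := exists_ne_zero_of_sum_ne_zero hpq
    obtain ⟨hp, hq⟩ := (ite_ne_right_iff.1 hk).1
    simp [hp, hq]
  out_le := by
    rintro ⟨b, u⟩
    have hin : ∑ p, chainFlow T p (b, u) = b := by
      rw [sum_chainFlow_left]
      induction b using Fin.cases with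
      | zero => simp [(Fin.succ_ne_zero _).symm]
      | succ k => simp [(hT _).col_sum]
    rw [sum_chainFlow_right, hin]
    induction b using Fin.lastCases with
    | last => simp [(Fin.castSucc_ne_last _).symm]
    | cast k => simp [(hT _).row_sum, add_comm]

lemma prod_card_isSemimagic_le_Kn (ι : Type*) [Fintype ι] {m n : ℕ}
    (hn : (m + 1) * Fintype.card ι ≤ n) {N : Fin n → ℤ} (hN : ∀ i, 1 ≤ N i) :
    ∏ k : Fin m, Nat.card {M : Matrix ι ι ℕ // IsSemimagic (k + 1) M} ≤ Kn n (extend n N) := by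
  rw [← Nat.card_pi]
  refine card_le_Kn (F := fun T => chainFlow fun k : Fin m => (T k).1) (fun S T h => ?_)
    (fun T => isLayeredFlow_chainFlow fun k : Fin m => (T k).2) (by simpa using hn) hN
  exact funext fun k => Subtype.ext (congrFun (chainFlow_injective h) k)

end Chain

section Bounds

lemma prod_range_div_add_one {e : ℕ} (he : 0 < e) (Q : ℕ) :
    ∏ t ∈ range (Q * e), (t / e + 1) = Q.factorial ^ e := by
  induction Q with
  | zero => simp
  | succ Q ih =>
    have hblock : ∏ x ∈ range e, ((Q * e + x) / e + 1) = (Q + 1) ^ e := by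
      rw [prod_eq_pow_card (b := Q + 1), card_range]
      intro x hx
      rw [Nat.mul_comm, Nat.mul_add_div he, Nat.div_eq_of_lt (mem_range.1 hx), add_zero]
    rw [add_mul, one_mul, prod_range_add, ih, hblock, Nat.factorial_succ, mul_pow, mul_comm]

lemma factorial_pow_le_Kn {n e Q : ℕ} (he : 0 < e) (hQ : 0 < Q) (hn : 2 * e ^ 2 * Q ≤ n)
    {N : Fin n → ℤ} (hN : ∀ i, 1 ≤ N i) :
    Q.factorial ^ e ^ 3 ≤ Kn n (extend n N) := by
  obtain ⟨m, hm⟩ : ∃ m, Q * e = m + 1 := Nat.exists_eq_add_one.2 (Nat.mul_pos hQ he)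
  have hcard : (m + 1) * Fintype.card (Fin e ⊕ Fin e) ≤ n := by
    rw [← hm, Fintype.card_sum, Fintype.card_fin]
    linarith
  calc Q.factorial ^ e ^ 3 = (∏ t ∈ range (m + 1), (t / e + 1)) ^ e ^ 2 := by
        rw [← hm, prod_range_div_add_one he, ← pow_mul, ← pow_succ']
    _ = ∏ k : Fin m, (((k : ℕ) + 1) / e + 1) ^ e ^ 2 := by
        rw [prod_range_succ', Nat.zero_div, zero_add, mul_one, prod_range, prod_pow]
    _ ≤ ∏ k : Fin m, Nat.card
          {M : Matrix (Fin e ⊕ Fin e) (Fin e ⊕ Fin e) ℕ // IsSemimagic (k + 1) M} :=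
        prod_le_prod' fun k _ => by simpa using pow_le_card_isSemimagic (κ := Fin e) (k + 1)
    _ ≤ Kn n (extend n N) := prod_card_isSemimagic_le_Kn _ hcard hN

lemma add_one_pow_le_three_mul_pow (m : ℕ) : (m + 1) ^ m ≤ 3 * m ^ m := by
  rcases m.eq_zero_or_pos with rfl | hm
  · norm_num
  have hm' : (0 : ℝ) < m := by exact_mod_cast hm
  have h : ((m : ℝ) + 1) ^ m ≤ 3 * (m : ℝ) ^ m := by
    calc ((m : ℝ) + 1) ^ m = (((m : ℝ)⁻¹ + 1) * m) ^ m := by field_simp; ring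
      _ ≤ (Real.exp (m : ℝ)⁻¹ * m) ^ m := by gcongr; exact Real.add_one_le_exp _
      _ = Real.exp 1 * (m : ℝ) ^ m := by
          rw [mul_pow, ← Real.exp_nat_mul, mul_inv_cancel₀ hm'.ne']
      _ ≤ 3 * (m : ℝ) ^ m := by gcongr; exact Real.exp_one_lt_three.le
  exact_mod_cast h

lemma pow_le_factorial_pow_five {Q : ℕ} (hQ : 15 ≤ Q) :
    (200 * (Q + 1)) ^ (Q + 1) ≤ Q.factorial ^ 5 := by
  induction Q, hQ using Nat.le_induction with
  | base => norm_num [Nat.factorial]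
  | succ Q hQ ih =>
    have hpow : 600 * (Q + 2) ≤ (Q + 1) ^ 5 := by
      calc 600 * (Q + 2) ≤ 15 ^ 4 * (Q + 1) := by omega
        _ ≤ (Q + 1) ^ 4 * (Q + 1) := by gcongr; omega
        _ = (Q + 1) ^ 5 := by ring
    calc (200 * (Q + 1 + 1)) ^ (Q + 1 + 1)
        = 200 * (Q + 2) * (200 ^ (Q + 1) * (Q + 1 + 1) ^ (Q + 1)) := by
          rw [pow_succ, ← mul_pow]; ring
      _ ≤ 200 * (Q + 2) * (200 ^ (Q + 1) * (3 * (Q + 1) ^ (Q + 1))) := by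
          gcongr; exact add_one_pow_le_three_mul_pow (Q + 1)
      _ = 600 * (Q + 2) * (200 * (Q + 1)) ^ (Q + 1) := by rw [mul_pow]; ring
      _ ≤ (Q + 1) ^ 5 * Q.factorial ^ 5 := by gcongr
      _ = (Q + 1).factorial ^ 5 := by rw [Nat.factorial_succ, mul_pow]

variable {n : ℕ} {N : Fin n → ℤ}

lemma add_one_pow_le_Kn (hn : 3000 ≤ n) (hN : ∀ i, 1 ≤ N i) :
    (n + 1) ^ (n - 1) ≤ Kn n (extend n N) := by
  set Q := n / 200
  calc (n + 1) ^ (n - 1) ≤ (200 * (Q + 1)) ^ (n - 1) := by gcongr; omega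
    _ ≤ (200 * (Q + 1)) ^ ((Q + 1) * 200) := by gcongr <;> omega
    _ = ((200 * (Q + 1)) ^ (Q + 1)) ^ 200 := pow_mul ..
    _ ≤ (Q.factorial ^ 5) ^ 200 := Nat.pow_le_pow_left (pow_le_factorial_pow_five (by omega)) _
    _ = Q.factorial ^ 10 ^ 3 := by rw [← pow_mul]; norm_num
    _ ≤ Kn n (extend n N) := factorial_pow_le_Kn (Q := Q) (by norm_num) (by omega) (by omega) hN

lemma mul_sqrt_div_le_log_Kn (hn : 4 ≤ n) (hN : ∀ i, 1 ≤ N i) :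
    n * √n / 100 ≤ Real.log (Kn n (extend n N)) := by
  have hsqrt : 2 ≤ √(n : ℝ) := Real.le_sqrt_of_sq_le (by norm_num; exact_mod_cast hn)
  have hsq : √(n : ℝ) ^ 2 = n := Real.sq_sqrt n.cast_nonneg
  set e := ⌊√(n : ℝ) / 2⌋₊
  have he_le : (e : ℝ) ≤ √n / 2 := Nat.floor_le (by positivity)
  have he_pos : 1 ≤ e := (Nat.one_le_floor_iff _).2 (by linarith)
  have he_ge : √n / 4 ≤ (e : ℝ) := by
    have : √n / 2 < (e : ℝ) + 1 := Nat.lt_floor_add_one _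
    have : (1 : ℝ) ≤ e := by exact_mod_cast he_pos
    linarith
  have hblocks : 2 * e ^ 2 * 2 ≤ n := by
    have : (2 * e ^ 2 * 2 : ℝ) ≤ n := by nlinarith
    exact_mod_cast this
  have hK : (2 : ℝ) ^ e ^ 3 ≤ Kn n (extend n N) := by
    exact_mod_cast factorial_pow_le_Kn he_pos two_pos hblocks hN
  calc n * √n / 100 = (√n / 4) ^ 3 * (64 / 100) := by nth_rw 1 [← hsq]; ring
    _ ≤ (e : ℝ) ^ 3 * Real.log 2 := by gcongr; linarith [Real.log_two_gt_d9]
    _ = Real.log (2 ^ e ^ 3) := by rw [Real.log_pow]; push_cast; rfl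
    _ ≤ Real.log (Kn n (extend n N)) := Real.log_le_log (by positivity) hK

lemma log_sq_div_four_le {x : ℝ} (hx : 1 ≤ x) :
    Real.log x ^ 2 / 4 ≤ √x / 100 + 75 * Real.log x := by
  have hlog : 0 ≤ Real.log x := Real.log_nonneg hx
  have hsqrt : Real.log x ^ 3 / 48 ≤ √x := by
    calc Real.log x ^ 3 / 48 = (Real.log x / 2) ^ 3 / Nat.factorial 3 := by
          norm_num [Nat.factorial]; ring
      _ ≤ Real.exp (Real.log x / 2) := Real.pow_div_factorial_le_exp _ (by positivity) 3
      _ = √x := by rw [Real.exp_half, Real.exp_log (by linarith)]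
  -- `75` makes the discriminant vanish: right side minus left is at least `hsquare / 4800`.
  have hsquare : 0 ≤ Real.log x * (Real.log x - 600) ^ 2 := by positivity
  linarith

lemma mul_log_sq_sub_le_log_Kn (hn : 1 ≤ n) (hN : ∀ i, 1 ≤ N i) :
    (n : ℝ) / 4 * Real.log n ^ 2 - 75 * n * Real.log ((n : ℝ) + 1) ≤
      Real.log (Kn n (extend n N)) := by
  have hn' : (1 : ℝ) ≤ n := by exact_mod_cast hn
  have hlog : 0 ≤ Real.log n := Real.log_nonneg hn'
  have hmono : Real.log n ≤ Real.log ((n : ℝ) + 1) := by gcongr; linarith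
  suffices n * (Real.log n ^ 2 / 4 - 75 * Real.log n) ≤ Real.log (Kn n (extend n N)) by
    have := mul_le_mul_of_nonneg_left hmono n.cast_nonneg
    linarith
  rcases lt_or_ge n 4 with hsmall | hlarge
  · have hle : Real.log n ≤ 3 := by
      have : (n : ℝ) ≤ 3 := by exact_mod_cast Nat.le_of_lt_succ hsmall
      linarith [Real.log_le_self n.cast_nonneg]
    calc (n : ℝ) * (Real.log n ^ 2 / 4 - 75 * Real.log n) ≤ 0 :=
          mul_nonpos_of_nonneg_of_nonpos n.cast_nonneg (by nlinarith)
      _ ≤ Real.log (Kn n (extend n N)) := Real.log_natCast_nonneg _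
  · calc (n : ℝ) * (Real.log n ^ 2 / 4 - 75 * Real.log n) ≤ n * (√n / 100) := by
          gcongr; linarith [log_sq_div_four_le hn']
      _ = n * √n / 100 := by ring
      _ ≤ Real.log (Kn n (extend n N)) := mul_sqrt_div_le_log_Kn hlarge hN

end Bounds

lemma tesler_netflow_eq_extend (n : ℕ) :
    (fun i : Fin (n + 1) => if (i : ℕ) = n then -(n : ℤ) else 1) = extend n 1 := by
  ext i
  induction i using Fin.lastCases with
  | last => simp [extend]
  | cast i => simp [extend, i.isLt.ne]

theorem kostant_Tesler_lower_bound_general :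
    ∃ C : ℝ, 0 < C ∧
      (∀ n : ℕ, 1 ≤ n → ∀ N : Fin n → ℤ, (∀ i, 1 ≤ N i) →
        ((n : ℝ) / 4) * Real.log n ^ 2 - C * n * Real.log ((n : ℝ) + 1) ≤
          Real.log (Kn n (extend n N))) ∧
      (∀ n : ℕ, 3000 ≤ n → ∀ N : Fin n → ℤ, (∀ i, 1 ≤ N i) →
        (n + 1) ^ (n - 1) ≤ Kn n (extend n N)) :=
  ⟨75, by norm_num, fun _ hn _ hN => mul_log_sq_sub_le_log_Kn hn hN,
    fun _ hn _ hN => add_one_pow_le_Kn hn hN⟩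

/-- **Theorem (Tesler case `N = (1,1,…,1,−n)`).** There is a constant `C > 0`
such that for every `n ≥ 1`,
`log K_n(1,…,1,−n) ≥ (n/4)·(log n)² − C·n·log(n+1)`;
moreover `K_n(1,…,1,−n) ≥ (n+1)^{n−1}` for every `n ≥ 3000`. -/
theorem kostant_Tesler_lower_bound :
    ∃ C : ℝ, 0 < C ∧
      (∀ n : ℕ, 1 ≤ n →
        ((n : ℝ) / 4) * Real.log n ^ 2 - C * n * Real.log ((n : ℝ) + 1) ≤
          Real.log (Kn n fun i => if (i : ℕ) = n then -(n : ℤ) else 1)) ∧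
      (∀ n : ℕ, 3000 ≤ n →
        (n + 1) ^ (n - 1) ≤ Kn n fun i => if (i : ℕ) = n then -(n : ℤ) else 1) := by
  obtain ⟨C, hC, hlog, hpow⟩ := kostant_Tesler_lower_bound_general
  simp only [tesler_netflow_eq_extend]
  exact ⟨C, hC, fun n hn => hlog n hn 1 fun _ => le_rfl, fun n hn => hpow n hn 1 fun _ => le_rfl⟩
end

section
/- There exists a constant C > 0 such that for all integers t ≥ 1 and n ≥ 2, log K_n(t·(n, n−2, n−4, …, −n+4, −n+2, −n)) ≥ (n²/2)·log((1+t)^{1+t}/t^{t}) − C·n·log(n·t), where log is the natural logarithm. -/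
open Finset

/-!
The weights of a flow on the edges joining non-consecutive vertices determine the flow, and they
extend to one as soon as their load on each cut between `{0, …, k}` and `{k + 1, …, n}` is at most
`N_0 + ⋯ + N_k`. Draw these weights independently from geometric laws with means `m e`. By
Chebyshev's inequality, with probability at least `1 / 2` no cut is overloaded and the information
content of the weights is close to its expectation `∑ e, h (m e)`; hence there are at
least roughly `exp (∑ e, h (m e))` flows.

With all means equal to `t` the entropy is as required, but the expected load of a cut nearly
exhausts its capacity. So the means are tilted towards the short edges. The average edge length
across any cut is `(n + 1) / 2`, whereas it is only about `(n + 1) / 3` over all edges; an affine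
tilt therefore frees a fixed proportion of the capacity of every cut and still raises the average of
the means. The gain is linear in the tilt and the loss of entropy quadratic, so a small tilt costs
no entropy beyond `O(n)`.
-/

section Entropy

theorem entH_eq_log_add {x : ℝ} (hx : 0 < x) :
    entH x = Real.log (1 + x) + x * Real.log (1 + 1 / x) := by
  have h : 1 + 1 / x = (1 + x) / x := by field_simp; ring
  rw [entH, h, Real.log_div (by positivity) hx.ne', add_comm x 1]
  ring

theorem log_one_add_one_div_le {x : ℝ} (hx : 0 < x) : Real.log (1 + 1 / x) ≤ 1 / x := by
  have := Real.log_le_sub_one_of_pos (show 0 < 1 + 1 / x by positivity)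
  linarith

theorem log_one_add_one_div_nonneg {x : ℝ} (hx : 0 < x) : 0 ≤ Real.log (1 + 1 / x) :=
  Real.log_nonneg (by linarith [one_div_pos.2 hx])

variable {t : ℝ}

theorem entH_le_log_add (ht : 0 < t) {y : ℝ} (hy : 0 < y) :
    entH t ≤ Real.log (1 + y) + t * Real.log (1 + 1 / y) := by
  have hsucc := Real.log_le_sub_one_of_pos (show 0 < (1 + t) / (1 + y) by positivity)
  have hratio := mul_le_mul_of_nonneg_left
    (Real.log_le_sub_one_of_pos (show 0 < (1 + 1 / t) / (1 + 1 / y) by positivity)) ht.le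
  rw [Real.log_div (by positivity) (by positivity)] at hsucc hratio
  have hcancel : (1 + t) / (1 + y) - 1 + t * ((1 + 1 / t) / (1 + 1 / y) - 1) = 0 := by
    field_simp
    ring
  rw [entH_eq_log_add ht]
  linarith

theorem mul_log_one_add_one_div_monotoneOn :
    MonotoneOn (fun x : ℝ => x * Real.log (1 + 1 / x)) (Set.Ioi 0) := by
  intro x (hx : 0 < x) y (hy : 0 < y) hxy
  have hbernoulli : 1 + y / x * (1 / y) ≤ (1 + 1 / y) ^ (y / x) :=
    one_add_mul_self_le_rpow_one_add (by linarith [one_div_pos.2 hy]) ((one_le_div hx).2 hxy)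
  rw [show y / x * (1 / y) = 1 / x by field_simp] at hbernoulli
  have hlog := Real.log_le_log (by positivity) hbernoulli
  rw [Real.log_rpow (by positivity), div_mul_eq_mul_div, le_div_iff₀' hx] at hlog
  exact hlog

theorem entH_add_le_entH_mul (ht : 0 < t) {α : ℝ} (hα : 1 / 2 ≤ α) :
    entH t + t * Real.log (1 + 1 / t) * ((α - 1) - 2 * (α - 1) ^ 2) ≤ entH (t * α) := by
  have hα' : 0 < α := by linarith
  have hy : 0 < t * α := by positivity
  set g : ℝ → ℝ := fun x => x * Real.log (1 + 1 / x) with hg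
  have hgt : 0 ≤ g t := mul_nonneg ht.le (log_one_add_one_div_nonneg ht)
  have hsecondOrder : (α - 1) - 2 * (α - 1) ^ 2 ≤ 1 - 1 / α := by
    have hinv : 1 / α ≤ 2 := by rw [div_le_iff₀ hα']; linarith
    have : 1 - 1 / α = (α - 1) - 1 / α * (α - 1) ^ 2 := by field_simp; ring
    linarith [mul_le_mul_of_nonneg_right hinv (sq_nonneg (α - 1))]
  have hmono : g t * (1 - 1 / α) ≤ g (t * α) * (1 - 1 / α) := by
    obtain h | h := le_total 1 α
    · refine mul_le_mul_of_nonneg_right ?_ (sub_nonneg.2 ((div_le_one hα').2 h))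
      exact mul_log_one_add_one_div_monotoneOn ht hy (le_mul_of_one_le_right ht.le h)
    · refine mul_le_mul_of_nonpos_right ?_ (sub_nonpos.2 ((one_le_div hα').2 h))
      exact mul_log_one_add_one_div_monotoneOn hy ht (mul_le_of_le_one_right ht.le h)
  calc entH t + g t * ((α - 1) - 2 * (α - 1) ^ 2)
      ≤ entH t + g t * (1 - 1 / α) := by gcongr
    _ ≤ (Real.log (1 + t * α) + t * Real.log (1 + 1 / (t * α))) + g (t * α) * (1 - 1 / α) :=
        add_le_add (entH_le_log_add ht hy) hmono
    _ = entH (t * α) := by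
        rw [entH_eq_log_add hy, hg]
        field_simp
        ring

theorem entH_le_log_one_add_add_one (ht : 0 < t) : entH t ≤ Real.log (1 + t) + 1 := by
  have hlog := mul_le_mul_of_nonneg_left (log_one_add_one_div_le ht) ht.le
  rw [mul_one_div_cancel ht.ne'] at hlog
  rw [entH_eq_log_add ht]
  linarith

theorem log_one_add_pow_div_pow {t : ℕ} (ht : 0 < t) :
    Real.log ((1 + (t : ℝ)) ^ (1 + t) / (t : ℝ) ^ t) = entH t := by
  rw [Real.log_div (by positivity) (by positivity), Real.log_pow, Real.log_pow, entH]
  push_cast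
  rw [add_comm (1 : ℝ)]

theorem half_le_log_mul_cast {t n : ℕ} (ht : 1 ≤ t) (hn : 2 ≤ n) :
    1 / 2 ≤ Real.log ((n : ℝ) * t) := by
  have : (2 : ℝ) ≤ n * t := by exact_mod_cast Nat.mul_le_mul hn ht
  linarith [Real.log_le_log two_pos this, Real.log_two_gt_d9]

theorem entH_le_three_mul_log {t n : ℕ} (ht : 1 ≤ t) (hn : 2 ≤ n) :
    entH t ≤ 3 * Real.log ((n : ℝ) * t) := by
  have hle : (1 + t : ℝ) ≤ n * t := by exact_mod_cast (by nlinarith : 1 + t ≤ n * t)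
  have hlog := Real.log_le_log (by positivity) hle
  linarith [entH_le_log_one_add_add_one (Nat.cast_pos (α := ℝ).2 ht), half_le_log_mul_cast ht hn]

end Entropy

section Probability

open MeasureTheory ProbabilityTheory

section GeometricMoments

variable {p : unitInterval}

theorem hasSum_geometric_mul_cast (hp : p ≠ 0) :
    HasSum (fun k : ℕ => ((1 - p : ℝ) ^ k * p) * k) ((1 - p) / p) := by
  have hp' : (p : ℝ) ≠ 0 := unitInterval.coe_ne_zero.2 hp
  have hr : ‖(1 - p : ℝ)‖ < 1 := by
    rw [Real.norm_of_nonneg (by grind)]; grind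
  convert! (hasSum_coe_mul_geometric_of_norm_lt_one hr).mul_left (p : ℝ) using 1
  · ext k; ring
  · rw [sub_sub_cancel]; field_simp

theorem hasSum_geometric_mul_cast_sq (hp : p ≠ 0) :
    HasSum (fun k : ℕ => ((1 - p : ℝ) ^ k * p) * (k : ℝ) ^ 2)
      ((1 - p) / p ^ 2 + ((1 - p) / p) ^ 2) := by
  have hp' : (p : ℝ) ≠ 0 := unitInterval.coe_ne_zero.2 hp
  have hr : ‖(1 - p : ℝ)‖ < 1 := by
    rw [Real.norm_of_nonneg (by grind)]; grind
  have hchoose := (hasSum_choose_mul_geometric_of_norm_lt_one 2 hr).mul_left (2 * (p : ℝ))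
  -- `k² = 2 * (k + 2).choose 2 - 3 * k - 2`
  convert! (hchoose.sub ((hasSum_geometric_mul_cast hp).mul_left 3)).sub
    ((hasSum_one_geometricMeasure hp).mul_left 2) using 1
  · ext k
    rw [Nat.cast_choose_two]
    push_cast
    ring
  · rw [sub_sub_cancel]; field_simp; ring

theorem memLp_cast_geometricMeasure (hp : p ≠ 0) :
    MemLp (fun k : ℕ => (k : ℝ)) 2 (geometricMeasure p) := by
  rw [memLp_two_iff_integrable_sq (by fun_prop), integrable_geometricMeasure_iff hp]
  simpa using (hasSum_geometric_mul_cast_sq hp).summable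

theorem integral_cast_geometricMeasure (hp : p ≠ 0) :
    ∫ k : ℕ, (k : ℝ) ∂geometricMeasure p = (1 - p) / p := by
  rw [integral_geometricMeasure hp]
  exact (hasSum_geometric_mul_cast hp).tsum_eq

theorem variance_cast_geometricMeasure (hp : p ≠ 0) :
    Var[fun k : ℕ => (k : ℝ); geometricMeasure p] = (1 - p) / p ^ 2 := by
  rw [variance_eq_sub (memLp_cast_geometricMeasure hp), integral_cast_geometricMeasure hp,
    integral_geometricMeasure hp]
  simp only [Pi.pow_apply, smul_eq_mul, (hasSum_geometric_mul_cast_sq hp).tsum_eq,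
    add_sub_cancel_right]

end GeometricMoments

/-- The success probability `1 / (1 + m)` for which the number of failures before the first success
has mean `m`. -/
noncomputable def successProb (m : ℝ) (hm : 0 < m) : unitInterval :=
  ⟨(1 + m)⁻¹, by positivity, inv_le_one_of_one_le₀ (by linarith)⟩

theorem coe_successProb {m : ℝ} (hm : 0 < m) : (successProb m hm : ℝ) = (1 + m)⁻¹ := rfl

theorem successProb_ne_zero {m : ℝ} (hm : 0 < m) : successProb m hm ≠ 0 := by
  rw [← unitInterval.coe_ne_zero, coe_successProb]
  positivity

/-- The geometric law on `ℕ` with mean `m`. It is parametrized by its mean because the random edge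
weights below are prescribed through their expected values. -/
noncomputable def geometricLaw (m : ℝ) (hm : 0 < m) : Measure ℕ :=
  geometricMeasure (successProb m hm)

namespace geometricLaw

variable {m : ℝ} (hm : 0 < m)

instance : IsProbabilityMeasure (geometricLaw m hm) :=
  inferInstanceAs (IsProbabilityMeasure (geometricMeasure _))

theorem real_singleton (k : ℕ) :
    (geometricLaw m hm).real {k} =
      Real.exp (-(Real.log (1 + m) + Real.log (1 + 1 / m) * k)) := by
  have hone_sub : 1 - (1 + m)⁻¹ = (1 + 1 / m)⁻¹ := by field_simp; ring
  rw [geometricLaw, geometricMeasure_real_singleton (successProb_ne_zero hm), coe_successProb,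
    neg_add, Real.exp_add, Real.exp_neg, Real.exp_log (by positivity), Real.exp_neg,
    mul_comm (Real.log _), Real.exp_nat_mul, Real.exp_log (by positivity), hone_sub, inv_pow,
    mul_comm]

theorem memLp_cast : MemLp (fun k : ℕ => (k : ℝ)) 2 (geometricLaw m hm) :=
  memLp_cast_geometricMeasure (successProb_ne_zero hm)

theorem integral_cast : ∫ k : ℕ, (k : ℝ) ∂geometricLaw m hm = m := by
  rw [geometricLaw, integral_cast_geometricMeasure (successProb_ne_zero hm), coe_successProb]
  field_simp
  ring

theorem variance_cast : Var[fun k : ℕ => (k : ℝ); geometricLaw m hm] = m * (1 + m) := by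
  rw [geometricLaw, variance_cast_geometricMeasure (successProb_ne_zero hm), coe_successProb]
  field_simp
  ring

end geometricLaw

theorem measureReal_pi_abs_sub_ge_le {ι : Type*} [Fintype ι] {Ω : ι → Type*}
    [∀ i, MeasurableSpace (Ω i)] {μ : ∀ i, Measure (Ω i)} [∀ i, IsProbabilityMeasure (μ i)]
    {X : ∀ i, Ω i → ℝ} (hX : ∀ i, MemLp (X i) 2 (μ i)) (s : Finset ι) {r : ℝ} (hr : 0 < r) :
    (Measure.pi μ).real {ω | r ≤ |∑ i ∈ s, X i (ω i) - ∑ i ∈ s, ∫ x, X i x ∂μ i|} ≤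
      (∑ i ∈ s, Var[X i; μ i]) / r ^ 2 := by
  have hY : ∀ i, MemLp (fun ω : ∀ i, Ω i => X i (ω i)) 2 (Measure.pi μ) := fun i =>
    (hX i).comp_measurePreserving (measurePreserving_eval _ i)
  have hmean : ∫ ω, ∑ i ∈ s, X i (ω i) ∂Measure.pi μ = ∑ i ∈ s, ∫ x, X i x ∂μ i := by
    rw [integral_finsetSum s fun i _ => (hY i).integrable one_le_two]
    exact sum_congr rfl fun i _ => integral_comp_eval (hX i).aestronglyMeasurable
  have hvar : Var[fun ω => ∑ i ∈ s, X i (ω i); Measure.pi μ] = ∑ i ∈ s, Var[X i; μ i] := by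
    have hindep := iIndepFun_pi fun i => (hX i).aestronglyMeasurable.aemeasurable
    have hsum := IndepFun.variance_sum (s := s) (fun i _ => hY i)
      fun i _ j _ hij => hindep.indepFun hij
    rw [sum_fn] at hsum
    rw [hsum]
    exact sum_congr rfl fun i _ => (measurePreserving_eval μ i).variance_fun_comp
      (hX i).aestronglyMeasurable.aemeasurable
  have hcheb := meas_ge_le_variance_div_sq (memLp_finsetSum s fun i _ => hY i) hr
  rw [hmean, hvar] at hcheb
  exact ENNReal.toReal_le_of_le_ofReal
    (div_nonneg (sum_nonneg fun i _ => variance_nonneg _ _) (sq_nonneg r)) hcheb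

theorem add_log_measureReal_le_log_ncard {Ω : Type*} [MeasurableSpace Ω]
    [MeasurableSingletonClass Ω] {μ : Measure Ω} [SigmaFinite μ] {S : Set Ω} (hS : S.Finite) {h : ℝ}
    (hmass : ∀ ω ∈ S, μ.real {ω} ≤ Real.exp (-h)) (hpos : 0 < μ.real S) :
    h + Real.log (μ.real S) ≤ Real.log S.ncard := by
  have hle : μ.real S ≤ S.ncard * Real.exp (-h) := by
    calc μ.real S = ∑ ω ∈ hS.toFinset, μ.real {ω} := by
          rw [sum_measureReal_singleton, hS.coe_toFinset]
      _ ≤ #hS.toFinset • Real.exp (-h) :=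
          sum_le_card_nsmul _ _ _ fun ω hω => hmass ω (hS.mem_toFinset.1 hω)
      _ = S.ncard * Real.exp (-h) := by rw [Set.ncard_eq_toFinset_card S hS, nsmul_eq_mul]
  have hcard : (S.ncard : ℝ) ≠ 0 := by
    intro h0
    rw [h0, zero_mul] at hle
    exact hpos.not_ge hle
  have hlog := Real.log_le_log hpos hle
  rw [Real.log_mul hcard (Real.exp_ne_zero _), Real.log_exp] at hlog
  linarith

section RandomWeights

variable {ι : Type*} [Fintype ι] {m : ι → ℝ}

/-- The information content of the weight vector `w` when its coordinates are independent and
geometric with means `m`: the negative logarithm of the probability of `w`. -/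
noncomputable def information (m : ι → ℝ) (w : ι → ℕ) : ℝ :=
  ∑ e, (Real.log (1 + m e) + Real.log (1 + 1 / m e) * w e)

theorem pi_geometricLaw_real_singleton (hm : ∀ e, 0 < m e) (w : ι → ℕ) :
    (Measure.pi fun e => geometricLaw (m e) (hm e)).real {w} = Real.exp (-information m w) := by
  rw [measureReal_def, Measure.pi_singleton, ENNReal.toReal_prod, information,
    ← sum_neg_distrib, Real.exp_sum]
  exact prod_congr rfl fun e _ => geometricLaw.real_singleton (hm e) (w e)

theorem pi_geometricLaw_real_sum_gt_le (hm : ∀ e, 0 < m e) (T : Finset ι) {b : ℝ}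
    (hb : ∑ e ∈ T, m e < b) :
    (Measure.pi fun e => geometricLaw (m e) (hm e)).real {w | b < ∑ e ∈ T, (w e : ℝ)} ≤
      (∑ e ∈ T, m e * (1 + m e)) / (b - ∑ e ∈ T, m e) ^ 2 := by
  have hcheb := measureReal_pi_abs_sub_ge_le (fun e => geometricLaw.memLp_cast (hm e)) T
    (sub_pos.2 hb)
  simp only [geometricLaw.integral_cast, geometricLaw.variance_cast] at hcheb
  refine (measureReal_mono fun w hw => ?_).trans hcheb
  exact (sub_le_sub_right (show b < ∑ e ∈ T, (w e : ℝ) from hw).le _).trans (le_abs_self _)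

theorem pi_geometricLaw_real_information_lt_le (hm : ∀ e, 0 < m e) {η : ℝ} (hη : 0 < η) :
    (Measure.pi fun e => geometricLaw (m e) (hm e)).real
        {w | information m w < ∑ e, entH (m e) - η} ≤
      (∑ e, (1 + 1 / m e)) / η ^ 2 := by
  have hcheb := measureReal_pi_abs_sub_ge_le (fun e => (geometricLaw.memLp_cast (hm e)).const_mul
    (Real.log (1 + 1 / m e))) univ hη
  simp only [integral_const_mul, variance_const_mul, geometricLaw.integral_cast,
    geometricLaw.variance_cast] at hcheb
  refine (measureReal_mono fun w hw => ?_).trans (hcheb.trans ?_)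
  · have hmean : ∑ e, entH (m e) - information m w =
        ∑ e, Real.log (1 + 1 / m e) * m e - ∑ e, Real.log (1 + 1 / m e) * (w e : ℝ) := by
      rw [information, ← sum_sub_distrib, ← sum_sub_distrib]
      exact sum_congr rfl fun e _ => by rw [entH_eq_log_add (hm e)]; ring
    rw [Set.mem_ofPred_eq, abs_sub_comm]
    refine le_trans ?_ (le_abs_self _)
    rw [← hmean]
    linarith [Set.mem_ofPred_eq ▸ hw]
  · gcongr with e
    calc Real.log (1 + 1 / m e) ^ 2 * (m e * (1 + m e))
        ≤ (1 / m e) ^ 2 * (m e * (1 + m e)) := by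
          have := hm e
          gcongr
          · exact log_one_add_one_div_nonneg this
          · exact log_one_add_one_div_le this
      _ = 1 + 1 / m e := by have := hm e; field_simp; ring

variable {κ : Type*} {s : Finset κ} {T : κ → Finset ι} {b : κ → ℝ} {η : ℝ}

/-- The weight vectors whose total weight on `T k` is at most the capacity `b k` for all `k ∈ s`. -/
def packings (s : Finset κ) (T : κ → Finset ι) (b : κ → ℝ) : Set (ι → ℕ) :=
  {w | ∀ k ∈ s, ∑ e ∈ T k, (w e : ℝ) ≤ b k}

theorem half_le_pi_geometricLaw_real_typical (hm : ∀ e, 0 < m e)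
    (hmean : ∀ k ∈ s, ∑ e ∈ T k, m e < b k)
    (hvar : ∑ k ∈ s, (∑ e ∈ T k, m e * (1 + m e)) / (b k - ∑ e ∈ T k, m e) ^ 2 ≤ 1 / 4)
    (hη : 0 < η) (hinfo : 4 * ∑ e, (1 + 1 / m e) ≤ η ^ 2) :
    1 / 2 ≤ (Measure.pi fun e => geometricLaw (m e) (hm e)).real
      {w ∈ packings s T b | ∑ e, entH (m e) - η ≤ information m w} := by
  set μ := Measure.pi fun e => geometricLaw (m e) (hm e)
  set typical := {w ∈ packings s T b | ∑ e, entH (m e) - η ≤ information m w}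
  set overload : κ → Set (ι → ℕ) := fun k => {w | b k < ∑ e ∈ T k, (w e : ℝ)}
  set likely : Set (ι → ℕ) := {w | information m w < ∑ e, entH (m e) - η}
  have hcover : Set.univ ⊆ typical ∪ ((⋃ k ∈ s, overload k) ∪ likely) := by
    intro w _
    by_contra! hw
    simp only [Set.mem_union, Set.mem_iUnion, not_or, not_exists, overload, likely,
      Set.mem_ofPred_eq, not_lt] at hw
    exact hw.1 ⟨hw.2.1, hw.2.2⟩
  have hoverload : μ.real (⋃ k ∈ s, overload k) ≤ 1 / 4 :=
    (measureReal_biUnion_finset_le _ _).trans <|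
      (sum_le_sum fun k hk => pi_geometricLaw_real_sum_gt_le hm (T k) (hmean k hk)).trans hvar
  have hlikely : μ.real likely ≤ 1 / 4 := by
    refine (pi_geometricLaw_real_information_lt_le hm hη).trans ?_
    rw [div_le_iff₀ (by positivity)]
    linarith
  have htotal : 1 ≤ μ.real typical + (μ.real (⋃ k ∈ s, overload k) + μ.real likely) := by
    calc 1 = μ.real Set.univ := probReal_univ.symm
      _ ≤ μ.real (typical ∪ ((⋃ k ∈ s, overload k) ∪ likely)) := measureReal_mono hcover
      _ ≤ μ.real typical + μ.real ((⋃ k ∈ s, overload k) ∪ likely) := measureReal_union_le _ _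
      _ ≤ _ := by gcongr; exact measureReal_union_le _ _
  linarith

theorem sum_entH_sub_le_log_ncard_packings (hm : ∀ e, 0 < m e)
    (hmean : ∀ k ∈ s, ∑ e ∈ T k, m e < b k)
    (hvar : ∑ k ∈ s, (∑ e ∈ T k, m e * (1 + m e)) / (b k - ∑ e ∈ T k, m e) ^ 2 ≤ 1 / 4)
    (hη : 0 < η) (hinfo : 4 * ∑ e, (1 + 1 / m e) ≤ η ^ 2) (hfin : (packings s T b).Finite) :
    ∑ e, entH (m e) - η - Real.log 2 ≤ Real.log (packings s T b).ncard := by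
  set typical := {w ∈ packings s T b | ∑ e, entH (m e) - η ≤ information m w}
  have hsub : typical ⊆ packings s T b := Set.sep_subset _ _
  have hhalf : 1 / 2 ≤ (Measure.pi fun e => geometricLaw (m e) (hm e)).real typical :=
    half_le_pi_geometricLaw_real_typical hm hmean hvar hη hinfo
  have hcount := add_log_measureReal_le_log_ncard (hfin.subset hsub) (fun w hw =>
    (pi_geometricLaw_real_singleton hm w).trans_le (Real.exp_le_exp.2 (neg_le_neg hw.2)))
    (one_half_pos.trans_le hhalf)
  have hlog_half := Real.log_le_log one_half_pos hhalf
  rw [one_div, Real.log_inv] at hlog_half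
  have hne : typical.Nonempty := by
    by_contra! h
    rw [h, measureReal_empty] at hhalf
    linarith
  have hmono : Real.log typical.ncard ≤ Real.log (packings s T b).ncard :=
    Real.log_le_log (Nat.cast_pos.2 ((Set.ncard_pos (hfin.subset hsub)).2 hne))
      (Nat.cast_le.2 (Set.ncard_le_ncard hsub hfin))
  linarith

end RandomWeights

end Probability

section Flows

variable {n : ℕ}

/-- The net flow `f` sends out of each vertex, in the form in which `IsIntFlow` prescribes it. -/
def netflow (f : Fin (n + 1) → Fin (n + 1) → ℕ) (i : Fin (n + 1)) : ℤ :=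
  (∑ j, if i < j then (f i j : ℤ) else 0) - ∑ k, if k < i then (f k i : ℤ) else 0

/-- The total flow across cut `k`, the cut that separates the vertices `0, …, k` from the vertices
`k + 1, …, n`. -/
def cutFlow (f : Fin (n + 1) → Fin (n + 1) → ℕ) (k : ℕ) : ℕ :=
  ∑ a : Fin (n + 1), ∑ b : Fin (n + 1), if (a : ℕ) ≤ k ∧ k < b then f a b else 0

theorem cutFlow_eq_sPartial_netflow (f : Fin (n + 1) → Fin (n + 1) → ℕ) (k : ℕ) :
    (cutFlow f k : ℤ) = sPartial n (netflow f) k := by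
  symm
  calc sPartial n (netflow f) k
      = (∑ a : Fin (n + 1), ∑ b : Fin (n + 1),
            if (a : ℕ) ≤ k then if a < b then (f a b : ℤ) else 0 else 0) -
          ∑ b : Fin (n + 1), ∑ a : Fin (n + 1),
            if (b : ℕ) ≤ k then if a < b then (f a b : ℤ) else 0 else 0 := by
        rw [sPartial, ← sum_sub_distrib]
        exact sum_congr rfl fun i _ => by split_ifs <;> simp [netflow]
    _ = (∑ a : Fin (n + 1), ∑ b : Fin (n + 1),
            if (a : ℕ) ≤ k then if a < b then (f a b : ℤ) else 0 else 0) -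
          ∑ a : Fin (n + 1), ∑ b : Fin (n + 1),
            if (b : ℕ) ≤ k then if a < b then (f a b : ℤ) else 0 else 0 :=
        congrArg _ sum_comm
    _ = (cutFlow f k : ℤ) := by
        simp only [cutFlow, Nat.cast_sum, ← sum_sub_distrib]
        refine sum_congr rfl fun a _ => sum_congr rfl fun b _ => ?_
        have := Fin.lt_def (a := a) (b := b)
        split_ifs <;> omega

theorem sPartial_zero (N : Fin (n + 1) → ℤ) : sPartial n N 0 = N 0 := by
  simp [sPartial]

theorem sPartial_succ (N : Fin (n + 1) → ℤ) (i : Fin n) :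
    sPartial n N (i + 1) = sPartial n N i + N i.succ := by
  have hsingle : N i.succ = ∑ j, if j = i.succ then N j else 0 := by simp
  rw [hsingle, sPartial, sPartial, ← sum_add_distrib]
  refine sum_congr rfl fun j _ => ?_
  have hj : j = i.succ ↔ (j : ℕ) = i + 1 := Fin.ext_iff
  simp only [hj]
  split_ifs <;> omega

theorem eq_of_sPartial_eq {N N' : Fin (n + 1) → ℤ}
    (h : ∀ k ≤ n, sPartial n N k = sPartial n N' k) : N = N' := by
  funext i
  induction i using Fin.cases with
  | zero => simpa only [sPartial_zero] using h 0 n.zero_le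
  | succ i =>
    have hsucc := h (i + 1) i.isLt
    rw [sPartial_succ, sPartial_succ, h i i.isLt.le] at hsucc
    exact add_left_cancel hsucc

theorem isIntFlow_iff_cutFlow {N : Fin (n + 1) → ℤ} {f : Fin (n + 1) → Fin (n + 1) → ℕ} :
    IsIntFlow n N f ↔
      (∀ i j, ¬ i < j → f i j = 0) ∧ ∀ k ≤ n, (cutFlow f k : ℤ) = sPartial n N k := by
  have hnetflow : netflow f = N ↔ ∀ k ≤ n, (cutFlow f k : ℤ) = sPartial n N k := by
    simp only [cutFlow_eq_sPartial_netflow]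
    exact ⟨fun h k _ => h ▸ rfl, eq_of_sPartial_eq⟩
  rw [← hnetflow]
  exact and_congr_right' funext_iff.symm

theorem le_cutFlow (f : Fin (n + 1) → Fin (n + 1) → ℕ) {a b : Fin (n + 1)} (hab : a < b) :
    f a b ≤ cutFlow f a := by
  let crossFlow (a' b' : Fin (n + 1)) : ℕ := if (a' : ℕ) ≤ a ∧ (a : ℕ) < b' then f a' b' else 0
  calc f a b = crossFlow a b := (if_pos ⟨le_rfl, hab⟩).symm
    _ ≤ ∑ b', crossFlow a b' := single_le_sum_of_canonicallyOrdered (mem_univ b)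
    _ ≤ cutFlow f a := single_le_sum_of_canonicallyOrdered
          (f := fun a' => ∑ b', crossFlow a' b') (mem_univ a)

theorem finite_isIntFlow_s12 (N : Fin (n + 1) → ℤ) : {f | IsIntFlow n N f}.Finite := by
  refine (Set.finite_Icc 0 fun (a _ : Fin (n + 1)) => (sPartial n N a).toNat).subset fun f hf =>
    ⟨fun a b => Nat.zero_le _, fun a b => ?_⟩
  obtain ⟨hzero, hcut⟩ := isIntFlow_iff_cutFlow.1 hf
  by_cases hab : a < b
  · dsimp only
    rw [← hcut a (Nat.lt_succ_iff.1 a.isLt), Int.toNat_natCast]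
    exact le_cutFlow f hab
  · rw [hzero a b hab]
    exact Nat.zero_le _

/-- The edges of the complete graph that join non-consecutive vertices. The weights of a flow on
them are free parameters: they determine its weights on the path edges `(i, i + 1)`. -/
abbrev FreeEdge (n : ℕ) : Type := {e : Fin (n + 1) × Fin (n + 1) // (e.1 : ℕ) + 1 < e.2}

/-- The free edges that cross cut `k`. -/
def crossing (n k : ℕ) : Finset (FreeEdge n) := {e | (e.1.1 : ℕ) ≤ k ∧ k < e.1.2}

theorem sum_crossing {M : Type*} [AddCommMonoid M] (φ : FreeEdge n → M) (k : ℕ) :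
    ∑ e ∈ crossing n k, φ e = ∑ a : Fin (n + 1), ∑ b : Fin (n + 1), if (a : ℕ) ≤ k ∧ k < b then
      if h : (a : ℕ) + 1 < b then φ ⟨(a, b), h⟩ else 0 else 0 := by
  rw [← Fintype.sum_prod_type' (f := fun a b : Fin (n + 1) => if (a : ℕ) ≤ k ∧ k < b then
    if h : (a : ℕ) + 1 < b then φ ⟨(a, b), h⟩ else 0 else 0)]
  refine sum_of_injOn Subtype.val Subtype.val_injective.injOn (fun _ _ => mem_univ _)
    (fun p _ hp => ?_) fun e he => ?_
  · rw [ite_eq_right_iff]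
    refine fun hcut => dif_neg fun hfree => hp ⟨⟨p, hfree⟩, ?_, rfl⟩
    simpa [crossing] using hcut
  · rw [if_pos (by simpa [crossing] using he), dif_pos e.2]

/-- The flow with the given weights `w` on the free edges and with path-edge weights chosen so that
cut `k` carries the partial sum `N 0 + ⋯ + N k`. Truncation at `0` makes this a flow with netflow
`N` only if `w` respects the capacities of the cuts. -/
def completion (N : Fin (n + 1) → ℤ) (w : FreeEdge n → ℕ) (a b : Fin (n + 1)) : ℕ :=
  if h : (a : ℕ) + 1 < b then w ⟨(a, b), h⟩
  else if (a : ℕ) + 1 = b then (sPartial n N a - ∑ e ∈ crossing n a, (w e : ℤ)).toNat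
  else 0

theorem completion_injective (N : Fin (n + 1) → ℤ) : Function.Injective (completion N) := by
  intro w w' h
  funext e
  simpa only [completion, dif_pos e.2] using congr_fun₂ h e.1.1 e.1.2

theorem cutFlow_completion {N : Fin (n + 1) → ℤ} {w : FreeEdge n → ℕ} {k : ℕ} (hk : k < n)
    (hw : ∑ e ∈ crossing n k, (w e : ℤ) ≤ sPartial n N k) :
    (cutFlow (completion N w) k : ℤ) = sPartial n N k := by
  set slack := (sPartial n N k - ∑ e ∈ crossing n k, (w e : ℤ)).toNat
  have hslack : (slack : ℤ) = sPartial n N k - ∑ e ∈ crossing n k, (w e : ℤ) :=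
    Int.toNat_of_nonneg (sub_nonneg.2 hw)
  have hpath : slack = ∑ a : Fin (n + 1), ∑ b : Fin (n + 1),
      if (a : ℕ) = k then if (b : ℕ) = k + 1 then slack else 0 else 0 := by
    rw [sum_eq_single (⟨k, by omega⟩ : Fin (n + 1)),
      sum_eq_single (⟨k + 1, by omega⟩ : Fin (n + 1))]
    · simp
    all_goals simp +contextual [Fin.ext_iff]
  have hcut : cutFlow (completion N w) k = ∑ e ∈ crossing n k, w e + slack := by
    rw [sum_crossing, hpath, ← sum_add_distrib, cutFlow]
    refine sum_congr rfl fun a _ => ?_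
    rw [← sum_add_distrib]
    refine sum_congr rfl fun b _ => ?_
    by_cases hpathEdge : (a : ℕ) = k ∧ (b : ℕ) = k + 1
    · simp [completion, hpathEdge.1, hpathEdge.2, slack]
    · simp only [completion]
      split_ifs <;> omega
  rw [hcut, Nat.cast_add, Nat.cast_sum, hslack]
  ring

theorem isIntFlow_completion {N : Fin (n + 1) → ℤ} (hN : sPartial n N n = 0) {w : FreeEdge n → ℕ}
    (hw : ∀ k < n, ∑ e ∈ crossing n k, (w e : ℤ) ≤ sPartial n N k) :
    IsIntFlow n N (completion N w) := by
  refine isIntFlow_iff_cutFlow.2 ⟨fun a b hab => ?_, fun k hk => ?_⟩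
  · have := Fin.not_lt.1 hab
    rw [completion, dif_neg (by omega), if_neg (by omega)]
  · obtain hk | rfl := hk.lt_or_eq
    · exact cutFlow_completion hk (hw k hk)
    · rw [hN, cutFlow, Nat.cast_eq_zero]
      exact sum_eq_zero fun a _ => sum_eq_zero fun b _ => if_neg (by omega)

/-- The free-edge weights whose load on each cut is at most the flow that cut has to carry. -/
def feasibleWeights (N : Fin (n + 1) → ℤ) : Set (FreeEdge n → ℕ) :=
  packings (range n) (crossing n) fun k => sPartial n N k

theorem mapsTo_completion {N : Fin (n + 1) → ℤ} (hN : sPartial n N n = 0) :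
    Set.MapsTo (completion N) (feasibleWeights N) {f | IsIntFlow n N f} :=
  fun _ hw => isIntFlow_completion hN fun k hk => by
    have hcap := hw k (mem_range.2 hk)
    dsimp only at hcap
    exact_mod_cast hcap

theorem finite_feasibleWeights {N : Fin (n + 1) → ℤ} (hN : sPartial n N n = 0) :
    (feasibleWeights N).Finite :=
  .of_injOn (mapsTo_completion hN) (completion_injective N).injOn (finite_isIntFlow_s12 N)

theorem ncard_feasibleWeights_le_Kn {N : Fin (n + 1) → ℤ} (hN : sPartial n N n = 0) :
    (feasibleWeights N).ncard ≤ Kn n N :=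
  Set.ncard_le_ncard_of_injOn _ (mapsTo_completion hN) (completion_injective N).injOn
    (finite_isIntFlow_s12 N)

theorem sum_entH_sub_le_log_Kn {N : Fin (n + 1) → ℤ} (hN : sPartial n N n = 0) {m : FreeEdge n → ℝ}
    (hm : ∀ e, 0 < m e) (hmean : ∀ k < n, ∑ e ∈ crossing n k, m e < sPartial n N k)
    (hvar : ∑ k ∈ range n, (∑ e ∈ crossing n k, m e * (1 + m e)) /
      (sPartial n N k - ∑ e ∈ crossing n k, m e) ^ 2 ≤ 1 / 4)
    {η : ℝ} (hη : 0 < η) (hinfo : 4 * ∑ e, (1 + 1 / m e) ≤ η ^ 2) :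
    ∑ e, entH (m e) - η - Real.log 2 ≤ Real.log (Kn n N) := by
  have hcount : ∑ e, entH (m e) - η - Real.log 2 ≤ Real.log (feasibleWeights N).ncard :=
    sum_entH_sub_le_log_ncard_packings hm (fun k hk => hmean k (mem_range.1 hk)) hvar hη hinfo
      (finite_feasibleWeights hN)
  have hle : ((feasibleWeights N).ncard : ℝ) ≤ Kn n N :=
    Nat.cast_le.2 (ncard_feasibleWeights_le_Kn hN)
  obtain h | h := (feasibleWeights N).ncard.eq_zero_or_pos
  · rw [h, Nat.cast_zero, Real.log_zero] at hcount
    exact hcount.trans (Real.log_natCast_nonneg _)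
  · exact hcount.trans (Real.log_le_log (Nat.cast_pos.2 h) hle)

theorem sPartial_two_rho (t : ℤ) {k : ℕ} (hk : k ≤ n) :
    sPartial n (fun i => t * ((n : ℤ) - 2 * ((i : ℕ) : ℤ))) k = t * ((k + 1) * (n - k)) := by
  induction k with
  | zero => simp [sPartial_zero]
  | succ k ih =>
    have hsucc := sPartial_succ (fun i : Fin (n + 1) => t * ((n : ℤ) - 2 * ((i : ℕ) : ℤ))) ⟨k, hk⟩
    rw [ih (by omega)] at hsucc
    rw [hsucc, Fin.val_succ]
    push_cast
    ring

end Flows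

section EdgeSums

variable {n : ℕ}

theorem sum_freeEdge {M : Type*} [AddCommMonoid M] (φ : ℕ → ℕ → M) :
    ∑ e : FreeEdge n, φ e.1.1 e.1.2 = ∑ k ∈ range n, ∑ a ∈ range k, φ a (k + 1) := by
  rw [sum_sigma']
  refine sum_bij (fun e _ => ⟨e.1.2 - 1, e.1.1⟩) (fun e _ => ?_) (fun e _ e' _ h => ?_)
    (fun p hp => ?_) fun e _ => ?_
  · have := e.2
    simp only [mem_sigma, mem_range]
    omega
  · have := e.2
    have := e'.2
    simp only [Sigma.mk.injEq, heq_eq_eq] at h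
    exact Subtype.ext (Prod.ext (Fin.ext h.2) (Fin.ext (by omega)))
  · simp only [mem_sigma, mem_range] at hp
    exact ⟨⟨(⟨p.2, by omega⟩, ⟨p.1 + 1, by omega⟩), by simpa using hp.2⟩, mem_univ _, rfl⟩
  · have := e.2
    rw [Nat.sub_add_cancel (by omega)]

theorem sum_crossing_le {M : Type*} [AddCommMonoid M] [PartialOrder M] [IsOrderedAddMonoid M]
    {φ : ℕ → ℕ → M} {k : ℕ} (hφ : ∀ a ≤ k, ∀ b ≤ n, k < b → 0 ≤ φ a b) :
    ∑ e ∈ crossing n k, φ e.1.1 e.1.2 ≤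
      ∑ a ∈ range (k + 1), ∑ b ∈ Ico (k + 1) (n + 1), φ a b := by
  have hinj : Function.Injective fun e : FreeEdge n => ((e.1.1 : ℕ), (e.1.2 : ℕ)) :=
    fun e e' h => Subtype.ext (Prod.ext (Fin.ext (congr_arg Prod.fst h))
      (Fin.ext (congr_arg Prod.snd h)))
  rw [← sum_product' (f := φ), ← sum_image (f := fun p : ℕ × ℕ => φ p.1 p.2) hinj.injOn]
  refine sum_le_sum_of_subset_of_nonneg (image_subset_iff.2 fun e he => ?_) fun p hp _ => ?_
  · have he : (e.1.1 : ℕ) ≤ k ∧ k < e.1.2 := by simpa [crossing] using he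
    simp only [mem_product, mem_range, mem_Ico]
    omega
  · simp only [mem_product, mem_range, mem_Ico] at hp
    exact hφ _ (by omega) _ (by omega) (by omega)

theorem sum_range_cast (m : ℕ) : ∑ i ∈ range m, (i : ℝ) = m * (m - 1) / 2 := by
  induction m with
  | zero => simp
  | succ m ih => rw [sum_range_succ, ih]; push_cast; ring

theorem card_freeEdge : (Fintype.card (FreeEdge n) : ℝ) = n * (n - 1) / 2 := by
  calc (Fintype.card (FreeEdge n) : ℝ) = ∑ _e : FreeEdge n, (1 : ℝ) := by simp
    _ = ∑ k ∈ range n, ∑ _a ∈ range k, (1 : ℝ) := sum_freeEdge fun _ _ => 1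
    _ = n * (n - 1) / 2 := by simp [sum_range_cast]

theorem sum_cut_const {k : ℕ} (hk : k ≤ n) (c : ℝ) :
    ∑ _a ∈ range (k + 1), ∑ _b ∈ Ico (k + 1) (n + 1), c = (k + 1) * (n - k) * c := by
  simp only [sum_const, card_range, Nat.card_Ico, nsmul_eq_mul, Nat.add_sub_add_right,
    Nat.cast_sub hk, Nat.cast_succ]
  ring

theorem card_crossing_le {k : ℕ} (hk : k ≤ n) :
    (#(crossing n k) : ℝ) ≤ (k + 1) * (n - k) := by
  calc (#(crossing n k) : ℝ) = ∑ _e ∈ crossing n k, (1 : ℝ) := by simp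
    _ ≤ ∑ _a ∈ range (k + 1), ∑ _b ∈ Ico (k + 1) (n + 1), (1 : ℝ) :=
        sum_crossing_le (φ := fun _ _ => 1) fun _ _ _ _ _ => zero_le_one
    _ = (k + 1) * (n - k) := by rw [sum_cut_const hk, mul_one]

theorem sum_freeEdge_length :
    ∑ e : FreeEdge n, ((e.1.2 : ℝ) - (e.1.1 : ℝ)) = n * (n - 1) * (n + 4) / 6 := by
  rw [sum_freeEdge fun a b => (b : ℝ) - (a : ℝ)]
  induction n with
  | zero => simp
  | succ n ih =>
    rw [sum_range_succ, ih, sum_sub_distrib, sum_range_cast, sum_const, card_range, nsmul_eq_mul]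
    push_cast
    ring

theorem sum_cut_length {k : ℕ} (hk : k ≤ n) :
    ∑ a ∈ range (k + 1), ∑ b ∈ Ico (k + 1) (n + 1), ((b : ℝ) - (a : ℝ)) =
      (k + 1) * (n - k) * ((n + 1) / 2) := by
  have hsum_b : ∑ b ∈ Ico (k + 1) (n + 1), (b : ℝ) = (n - k) * ((n + k + 1) / 2) := by
    rw [sum_Ico_eq_sub _ (Nat.succ_le_succ hk), sum_range_cast, sum_range_cast]
    push_cast
    ring
  simp only [sum_sub_distrib, hsum_b, sum_const, card_range, Nat.card_Ico, nsmul_eq_mul, ← mul_sum,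
    sum_range_cast, Nat.add_sub_add_right, Nat.cast_sub hk]
  push_cast
  ring

/-- The factor by which the mean weight of the edge `(a, b)` is tilted, an affine function of the
length `b - a`. Its average is `99 / 100` over the edges across any cut and tends to `101 / 100`
over all edges, while the square of its deviation from `1` is less than `1 / 200`. -/
noncomputable def tilt (n a b : ℕ) : ℝ := 21 / 20 - 3 / 25 / (n + 1) * (b - a)

theorem tilt_mem_Icc {a b : ℕ} (hab : a ≤ b) (hb : b ≤ n) :
    tilt n a b ∈ Set.Icc (93 / 100) (21 / 20) := by
  have hab : (a : ℝ) ≤ b := by exact_mod_cast hab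
  have hb : (b : ℝ) ≤ n := by exact_mod_cast hb
  have hlength : (b - a : ℝ) / (n + 1) ∈ Set.Icc 0 1 :=
    ⟨div_nonneg (by linarith) (by positivity),
      (div_le_one (by positivity)).2 (by linarith [Nat.cast_nonneg (α := ℝ) a])⟩
  rw [tilt, div_mul_eq_mul_div, mul_div_assoc]
  constructor <;> linarith [hlength.1, hlength.2]

theorem FreeEdge.tilt_mem_Icc (e : FreeEdge n) :
    tilt n e.1.1 e.1.2 ∈ Set.Icc (93 / 100) (21 / 20) :=
  _root_.tilt_mem_Icc (by have := e.2; omega) (by omega)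

theorem sum_freeEdge_tilt_sub_one :
    ∑ e : FreeEdge n, (tilt n e.1.1 e.1.2 - 1) =
      n * (n - 1) / 2 * (1 / 100 - 3 / 25 / (n + 1)) := by
  calc ∑ e : FreeEdge n, (tilt n e.1.1 e.1.2 - 1)
      = ∑ _e : FreeEdge n, (1 / 20 : ℝ) -
          3 / 25 / (n + 1) * ∑ e : FreeEdge n, ((e.1.2 : ℝ) - (e.1.1 : ℝ)) := by
        rw [mul_sum, ← sum_sub_distrib]
        exact sum_congr rfl fun e _ => by rw [tilt]; ring
    _ = n * (n - 1) / 2 * (1 / 100 - 3 / 25 / (n + 1)) := by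
        rw [sum_freeEdge_length, sum_const, card_univ, nsmul_eq_mul, card_freeEdge]
        field_simp
        ring

theorem sum_crossing_tilt_le {k : ℕ} (hk : k ≤ n) :
    ∑ e ∈ crossing n k, tilt n e.1.1 e.1.2 ≤ 99 / 100 * ((k + 1) * (n - k)) := by
  calc ∑ e ∈ crossing n k, tilt n e.1.1 e.1.2
      ≤ ∑ a ∈ range (k + 1), ∑ b ∈ Ico (k + 1) (n + 1), tilt n a b :=
        sum_crossing_le fun a ha b hb hab => by linarith [(tilt_mem_Icc (ha.trans hab.le) hb).1]
    _ = ∑ _a ∈ range (k + 1), ∑ _b ∈ Ico (k + 1) (n + 1), (21 / 20 : ℝ) -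
          3 / 25 / (n + 1) *
            ∑ a ∈ range (k + 1), ∑ b ∈ Ico (k + 1) (n + 1), ((b : ℝ) - (a : ℝ)) := by
        simp only [tilt, mul_sum, ← sum_sub_distrib]
    _ = 99 / 100 * ((k + 1) * (n - k)) := by
        rw [sum_cut_const hk, sum_cut_length hk]
        field_simp
        ring

end EdgeSums

theorem sum_one_div_succ_mul_sub (n : ℕ) :
    ∑ k ∈ range n, 1 / ((k + 1 : ℝ) * (n - k)) = 2 * harmonic n / (n + 1) := by
  have hpartialFraction : ∀ k ∈ range n, 1 / ((k + 1 : ℝ) * (n - k)) =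
      (1 / (k + 1 : ℝ) + 1 / (((n - 1 - k : ℕ) : ℝ) + 1)) / (n + 1) := by
    intro k hk
    have hk : (k : ℝ) < n := by exact_mod_cast mem_range.1 hk
    have hreflect : ((n - 1 - k : ℕ) : ℝ) + 1 = n - k := by
      rw [← Nat.cast_succ, ← Nat.cast_sub (by exact_mod_cast hk.le)]
      congr 1
      have : k < n := by exact_mod_cast hk
      omega
    have : (n - k : ℝ) ≠ 0 := by linarith
    rw [hreflect]
    field_simp
    ring
  rw [sum_congr rfl hpartialFraction, ← sum_div, sum_add_distrib,
    sum_range_reflect fun k => 1 / ((k : ℝ) + 1), harmonic]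
  push_cast
  simp only [one_div]
  ring

theorem tendsto_sum_one_div_succ_mul_sub :
    Filter.Tendsto (fun n : ℕ => ∑ k ∈ range n, 1 / ((k + 1 : ℝ) * (n - k))) Filter.atTop
      (nhds 0) := by
  have hlog : Filter.Tendsto (fun n : ℕ => 2 * ((1 + Real.log n) / n)) Filter.atTop (nhds 0) := by
    simp only [add_div]
    simpa using (tendsto_one_div_atTop_nhds_zero_nat.add
      (Real.isLittleO_log_id_atTop.tendsto_div_nhds_zero.comp
        tendsto_natCast_atTop_atTop)).const_mul (2 : ℝ)
  refine squeeze_zero' (.of_forall fun n => ?_) ?_ hlog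
  · refine sum_nonneg fun k hk => ?_
    have : (k : ℝ) ≤ n := by exact_mod_cast (mem_range.1 hk).le
    exact one_div_nonneg.2 (mul_nonneg (by positivity) (sub_nonneg.2 this))
  · filter_upwards [Filter.eventually_gt_atTop 0] with n hn
    rw [sum_one_div_succ_mul_sub, mul_div_assoc]
    have := harmonic_le_one_add_log n
    have := Real.log_natCast_nonneg n
    gcongr
    linarith

section TiltedMeans

variable {t : ℝ} {n : ℕ}

/-- The expected weight of the free edge `e` when the weights are drawn at random: the constant mean
`t` adjusted by the tilt. -/
noncomputable def meanWeight (t : ℝ) (e : FreeEdge n) : ℝ := t * tilt n e.1.1 e.1.2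

theorem half_le_meanWeight (ht : 1 ≤ t) (e : FreeEdge n) : 1 / 2 ≤ meanWeight t e := by
  have := e.tilt_mem_Icc.1
  rw [meanWeight]
  nlinarith

theorem meanWeight_mul_one_add_le (ht : 1 ≤ t) (e : FreeEdge n) :
    meanWeight t e * (1 + meanWeight t e) ≤ 3 * t ^ 2 := by
  have hle : meanWeight t e ≤ 21 / 20 * t := by
    rw [meanWeight, mul_comm]
    exact mul_le_mul_of_nonneg_right e.tilt_mem_Icc.2 (by linarith)
  nlinarith [half_le_meanWeight ht e]

theorem sum_crossing_meanWeight_le (ht : 0 ≤ t) {k : ℕ} (hk : k ≤ n) :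
    ∑ e ∈ crossing n k, meanWeight t e ≤ 99 / 100 * (t * ((k + 1) * (n - k))) := by
  simp only [meanWeight, ← mul_sum]
  rw [mul_left_comm]
  exact mul_le_mul_of_nonneg_left (sum_crossing_tilt_le hk) ht

theorem sum_crossing_variance_div_sq_slack_le (ht : 1 ≤ t) {k : ℕ} (hk : k < n) :
    (∑ e ∈ crossing n k, meanWeight t e * (1 + meanWeight t e)) /
        (t * ((k + 1) * (n - k)) - ∑ e ∈ crossing n k, meanWeight t e) ^ 2 ≤
      30000 * (1 / ((k + 1) * (n - k))) := by
  have hk' : (k : ℝ) < n := by exact_mod_cast hk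
  have hsize : 0 < (k + 1 : ℝ) * (n - k) := mul_pos (by positivity) (sub_pos.2 hk')
  set z := (k + 1 : ℝ) * (n - k)
  have hvar : ∑ e ∈ crossing n k, meanWeight t e * (1 + meanWeight t e) ≤ z * (3 * t ^ 2) :=
    (sum_le_card_nsmul _ _ _ fun e _ => meanWeight_mul_one_add_le ht e).trans <| by
      rw [nsmul_eq_mul]
      gcongr
      exact card_crossing_le hk.le
  have hslack : t * z / 100 ≤ t * z - ∑ e ∈ crossing n k, meanWeight t e := by
    linarith [sum_crossing_meanWeight_le (zero_le_one.trans ht) hk.le]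
  calc (∑ e ∈ crossing n k, meanWeight t e * (1 + meanWeight t e)) /
          (t * z - ∑ e ∈ crossing n k, meanWeight t e) ^ 2
      ≤ z * (3 * t ^ 2) / (t * z / 100) ^ 2 := by gcongr
    _ = 30000 * (1 / z) := by field_simp; norm_num

theorem four_mul_sum_one_add_one_div_meanWeight_le (ht : 1 ≤ t) :
    4 * ∑ e : FreeEdge n, (1 + 1 / meanWeight t e) ≤ (3 * n) ^ 2 := by
  have hterm (e : FreeEdge n) : 1 + 1 / meanWeight t e ≤ 3 := by
    have := one_div_le_one_div_of_le one_half_pos (half_le_meanWeight ht e)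
    rw [one_div_one_div] at this
    linarith
  have hsum := sum_le_card_nsmul univ _ _ fun e _ => hterm e
  rw [card_univ, nsmul_eq_mul, card_freeEdge] at hsum
  nlinarith [Nat.cast_nonneg (α := ℝ) n]

theorem neg_le_sum_tilt_sub_one_sub_sq :
    -(n : ℝ) ≤ ∑ e : FreeEdge n,
      ((tilt n e.1.1 e.1.2 - 1) - 2 * (tilt n e.1.1 e.1.2 - 1) ^ 2) := by
  have hsquare (e : FreeEdge n) : 2 * (tilt n e.1.1 e.1.2 - 1) ^ 2 ≤ 1 / 100 := by
    nlinarith [e.tilt_mem_Icc.1, e.tilt_mem_Icc.2]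
  have hsum_square := sum_le_card_nsmul univ _ _ fun e _ => hsquare e
  rw [card_univ, nsmul_eq_mul, card_freeEdge] at hsum_square
  have herror : n * (n - 1) / 2 * (3 / 25 / (n + 1)) ≤ (n : ℝ) := by
    field_simp
    nlinarith [Nat.cast_nonneg (α := ℝ) n]
  rw [sum_sub_distrib, sum_freeEdge_tilt_sub_one]
  linarith

theorem mul_entH_sub_le_sum_entH_meanWeight (ht : 0 < t) :
    n * (n - 1) / 2 * entH t - n ≤ ∑ e : FreeEdge n, entH (meanWeight t e) := by
  set deficit : ℝ := ∑ e : FreeEdge n,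
    ((tilt n e.1.1 e.1.2 - 1) - 2 * (tilt n e.1.1 e.1.2 - 1) ^ 2)
  have hslope_nonneg : 0 ≤ t * Real.log (1 + 1 / t) :=
    mul_nonneg ht.le (log_one_add_one_div_nonneg ht)
  have hslope_le : t * Real.log (1 + 1 / t) ≤ 1 := by
    have := mul_le_mul_of_nonneg_left (log_one_add_one_div_le ht) ht.le
    rwa [mul_one_div_cancel ht.ne'] at this
  have hloss : -(n : ℝ) ≤ t * Real.log (1 + 1 / t) * deficit := by
    have := mul_le_mul_of_nonneg_left (neg_le_sum_tilt_sub_one_sub_sq (n := n)) hslope_nonneg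
    nlinarith [Nat.cast_nonneg (α := ℝ) n]
  calc n * (n - 1) / 2 * entH t - n
      ≤ n * (n - 1) / 2 * entH t + t * Real.log (1 + 1 / t) * deficit := by linarith
    _ = ∑ e : FreeEdge n, (entH t + t * Real.log (1 + 1 / t) *
          ((tilt n e.1.1 e.1.2 - 1) - 2 * (tilt n e.1.1 e.1.2 - 1) ^ 2)) := by
        rw [sum_add_distrib, ← mul_sum, sum_const, card_univ, nsmul_eq_mul, card_freeEdge]
    _ ≤ ∑ e : FreeEdge n, entH (meanWeight t e) :=
        sum_le_sum fun e _ => entH_add_le_entH_mul ht (by linarith [e.tilt_mem_Icc.1])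

end TiltedMeans

theorem eventually_le_log_Kn_two_rho : ∀ᶠ n : ℕ in Filter.atTop, ∀ t : ℕ, 1 ≤ t →
    n * (n - 1) / 2 * entH t - 5 * n ≤
      Real.log (Kn n fun i => (t : ℤ) * ((n : ℤ) - 2 * ((i : ℕ) : ℤ))) := by
  filter_upwards [Filter.eventually_ge_atTop 1,
    tendsto_sum_one_div_succ_mul_sub.eventually_le_const (show (0 : ℝ) < 1 / 120000 by norm_num)]
    with n hn hcuts t ht
  have hn' : (1 : ℝ) ≤ n := by exact_mod_cast hn
  have ht' : (1 : ℝ) ≤ t := by exact_mod_cast ht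
  set N : Fin (n + 1) → ℤ := fun i => (t : ℤ) * ((n : ℤ) - 2 * ((i : ℕ) : ℤ)) with hN
  have hcapacity {k : ℕ} (hk : k ≤ n) : (sPartial n N k : ℝ) = t * ((k + 1) * (n - k)) := by
    rw [hN, sPartial_two_rho t hk]
    push_cast
    rfl
  have hnet : sPartial n N n = 0 := by rw [hN, sPartial_two_rho t le_rfl]; ring
  have hmean (k) (hk : k < n) : ∑ e ∈ crossing n k, meanWeight t e < sPartial n N k := by
    have : (0 : ℝ) < n - k := sub_pos.2 (by exact_mod_cast hk)
    have : 0 < (t : ℝ) * ((k + 1) * (n - k)) := by positivity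
    rw [hcapacity hk.le]
    linarith [sum_crossing_meanWeight_le (Nat.cast_nonneg t) hk.le]
  have hvar : ∑ k ∈ range n, (∑ e ∈ crossing n k, meanWeight t e * (1 + meanWeight t e)) /
      (sPartial n N k - ∑ e ∈ crossing n k, meanWeight t e) ^ 2 ≤ 1 / 4 := by
    calc _ ≤ ∑ k ∈ range n, 30000 * (1 / ((k + 1 : ℝ) * (n - k))) := sum_le_sum fun k hk => by
          rw [hcapacity (mem_range.1 hk).le]
          exact sum_crossing_variance_div_sq_slack_le ht' (mem_range.1 hk)
      _ ≤ 1 / 4 := by rw [← mul_sum]; linarith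
  have hKn := sum_entH_sub_le_log_Kn hnet
    (fun e => one_half_pos.trans_le (half_le_meanWeight ht' e)) hmean hvar (by positivity)
    (four_mul_sum_one_add_one_div_meanWeight_le ht')
  linarith [mul_entH_sub_le_sum_entH_meanWeight (n := n) (zero_lt_one.trans_le ht'),
    Real.log_two_lt_d9]

/-- **Theorem (the `t·2ρ` case).** There is a constant `C > 0` such that for all
integers `t ≥ 1` and `n ≥ 2`,
`log K_n(t·(n, n−2, …, −n+2, −n)) ≥ (n²/2)·log((1+t)^{1+t}/t^t) − C·n·log(n·t)`. -/
theorem kostant_two_rho_lower_bound :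
    ∃ C : ℝ, 0 < C ∧ ∀ t n : ℕ, 1 ≤ t → 2 ≤ n →
      ((n : ℝ) ^ 2 / 2) * Real.log ((1 + (t : ℝ)) ^ (1 + t) / (t : ℝ) ^ t) -
          C * n * Real.log ((n : ℝ) * t) ≤
        Real.log (Kn n fun i => (t : ℤ) * ((n : ℤ) - 2 * ((i : ℕ) : ℤ))) := by
  obtain ⟨n₀, hlarge⟩ := Filter.eventually_atTop.1 eventually_le_log_Kn_two_rho
  refine ⟨12 + 2 * n₀, by positivity, fun t n ht hn => ?_⟩
  have hentropy := entH_le_three_mul_log ht hn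
  have hlog := half_le_log_mul_cast ht hn
  rw [log_one_add_pow_div_pow ht]
  set L := Real.log ((n : ℝ) * t)
  obtain hn₀ | hn₀ := le_or_gt n₀ n
  · refine le_trans ?_ (hlarge n hn₀ t ht)
    have : 0 ≤ (n₀ : ℝ) * (n * L) := by positivity
    nlinarith [mul_le_mul_of_nonneg_left hentropy (Nat.cast_nonneg n)]
  · refine le_trans ?_ (Real.log_natCast_nonneg _)
    have hn₀ : (n : ℝ) ≤ n₀ := by exact_mod_cast hn₀.le
    have := mul_le_mul_of_nonneg_left hentropy (sq_nonneg (n : ℝ))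
    nlinarith [mul_le_mul_of_nonneg_right hn₀ (show 0 ≤ n * L by positivity)]
end
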